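/- Let (X,d) be a metric space and ν a Borel probability measure on X satisfying the Gaussian enlargement property with parameter τ > 0. Let H > 0 and let z ∈ X satisfy ∫_X d(z,y)² dν(y) ≤ H·τ. Then for every A > 1 and every r ≥ √(A·H·τ), ν(X \ B(z,r)) ≤ 1 - Φ(Φ⁻¹(1 - 1/A) + (r - √(A·H·τ))/√(2τ)). In particular, for every r ≥ √(2Hτ), ν(X \ B(z,r)) ≤ Φ(-(r - √(2Hτ))/√(2τ)). -/

import Mathlib

open Real MeasureTheory

/-- The standard Gaussian density. -/
noncomputable def gaussPdf (z : ℝ) : ℝ := (Real.sqrt (2 * Real.pi))⁻¹ * Real.exp (-z ^ 2 / 2)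

/-- The standard normal CDF. -/
noncomputable def Phi (r : ℝ) : ℝ := ∫ z in Set.Iic r, gaussPdf z

/-- The inverse of the standard normal CDF. -/
noncomputable def PhiInv : ℝ → ℝ := Function.invFun Phi

/-- The open `r`-enlargement `E_r = {y : d(y,E) < r}` of a set (with `E_0 = E`). -/
noncomputable def enlarge {X : Type*} [MetricSpace X] (E : Set X) (r : ℝ) : Set X :=
  if r = 0 then E else Metric.thickening r E

/-- A Borel probability measure `ν` on a metric space satisfies the Gaussian enlargement
property with parameter `τ > 0` if for every Borel set `E` with `0 < ν(E) < 1` and every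
`r ≥ 0`, `ν(E_r) ≥ Φ(Φ⁻¹(ν(E)) + r/√(2τ))`. -/
def GaussianEnlargement {X : Type*} [MetricSpace X] [MeasurableSpace X]
    (ν : Measure X) (τ : ℝ) : Prop :=
  ∀ E : Set X, MeasurableSet E → 0 < ν E → ν E < 1 → ∀ r : ℝ, 0 ≤ r →
    ENNReal.ofReal (Phi (PhiInv (ν E).toReal + r / Real.sqrt (2 * τ))) ≤ ν (enlarge E r)

/-- The distance `d(A,B) = inf {d(a,b) : a ∈ A, b ∈ B}` between two sets. -/
noncomputable def setDist {X : Type*} [MetricSpace X] (A B : Set X) : ℝ :=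
  sInf (Set.image2 dist A B)

/-!
By Chebyshev's inequality the ball of radius `R = √(AHτ)` about `z` has mass at least `1 - 1/A`. Its
enlargement by `r - R` stays inside the ball of radius `r`, so the enlargement property, together
with the monotonicity of `Φ` and `Φ⁻¹`, bounds the mass of the latter from below. For `A = 2` the
starting mass is `1/2 = Φ(0)`, and the symmetry `1 - Φ(t) = Φ(-t)` gives the second bound.
-/

section CDF

open ProbabilityTheory Set

variable {μ : Measure ℝ} [IsProbabilityMeasure μ]

lemma strictMono_cdf [μ.IsOpenPosMeasure] : StrictMono (cdf μ) := by
  intro a b hab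
  have hpos : 0 < (cdf μ).measure (Ioc a b) := by
    rw [measure_cdf]
    exact (Measure.measure_Ioo_pos μ |>.2 hab).trans_le (measure_mono Ioo_subset_Ioc_self)
  rwa [StieltjesFunction.measure_Ioc, ENNReal.ofReal_pos, sub_pos] at hpos

lemma continuous_cdf [NullSingletonClass μ] : Continuous (cdf μ) := by
  refine continuous_iff_continuousAt.2 fun x ↦ ?_
  have hjump : (cdf μ).measure {x} = 0 := by rw [measure_cdf, measure_singleton]
  rw [StieltjesFunction.measure_singleton, ENNReal.ofReal_eq_zero, sub_nonpos] at hjump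
  rw [(monotone_cdf μ).continuousAt_iff_leftLim_eq_rightLim, StieltjesFunction.rightLim_eq]
  exact le_antisymm ((monotone_cdf μ).leftLim_le le_rfl) hjump

lemma Ioo_subset_range_cdf [NullSingletonClass μ] : Ioo 0 1 ⊆ range (cdf μ) := fun _ hp ↦
  mem_range_of_exists_le_of_exists_ge continuous_cdf
    ((tendsto_cdf_atBot μ).eventually_le_const hp.1).exists
    ((tendsto_cdf_atTop μ).eventually_const_le hp.2).exists

lemma cdf_neg [NullSingletonClass μ] (hμ : μ.map (fun x ↦ -x) = μ) (x : ℝ) :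
    cdf μ (-x) = 1 - cdf μ x := calc
  cdf μ (-x) = (μ.map fun x ↦ -x).real (Iic (-x)) := by rw [hμ, cdf_eq_real]
  _ = μ.real (Iio x)ᶜ := by
    rw [map_measureReal_apply measurable_neg measurableSet_Iic, compl_Iio]
    congr 1
    ext y
    simp
  _ = 1 - cdf μ x := by
    rw [probReal_compl_eq_one_sub measurableSet_Iio, measureReal_congr Iio_ae_eq_Iic, cdf_eq_real]

end CDF

section StandardNormal

open ProbabilityTheory Set

instance (m : ℝ) (v : NNReal) [NeZero v] : NullSingletonClass (gaussianReal m v) :=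
  nullSingletonClass_gaussianReal (NeZero.ne v)

instance (m : ℝ) (v : NNReal) [NeZero v] : (gaussianReal m v).IsOpenPosMeasure :=
  (gaussianReal_absolutelyContinuous' m (NeZero.ne v)).isOpenPosMeasure

lemma gaussPdf_eq_gaussianPDFReal : gaussPdf = gaussianPDFReal 0 1 := by
  ext x
  simp [gaussPdf, gaussianPDFReal]

lemma Phi_eq_cdf : Phi = cdf (gaussianReal 0 1) := by
  ext x
  rw [cdf_eq_real, measureReal_def, gaussianReal_apply_eq_integral 0 one_ne_zero,
    ENNReal.toReal_ofReal (integral_nonneg (gaussianPDFReal_nonneg 0 1)), Phi,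
    gaussPdf_eq_gaussianPDFReal]

lemma Phi_le_one (x : ℝ) : Phi x ≤ 1 := Phi_eq_cdf ▸ cdf_le_one _ x

lemma Phi_strictMono : StrictMono Phi := Phi_eq_cdf ▸ strictMono_cdf

lemma Phi_neg (x : ℝ) : Phi (-x) = 1 - Phi x :=
  Phi_eq_cdf ▸ cdf_neg (by rw [gaussianReal_map_neg, neg_zero]) x

lemma Phi_zero : Phi 0 = 1 / 2 := by
  have h := Phi_neg 0
  rw [neg_zero] at h
  linarith

lemma Phi_PhiInv {p : ℝ} (hp : p ∈ Ioo 0 1) : Phi (PhiInv p) = p :=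
  Function.invFun_eq (Phi_eq_cdf ▸ Ioo_subset_range_cdf hp)

lemma PhiInv_strictMonoOn : StrictMonoOn PhiInv (Ioo 0 1) := fun p hp q hq hpq ↦
  Phi_strictMono.lt_iff_lt.1 (by rwa [Phi_PhiInv hp, Phi_PhiInv hq])

lemma PhiInv_half : PhiInv (1 / 2) = 0 :=
  Phi_zero ▸ Function.leftInverse_invFun Phi_strictMono.injective 0

end StandardNormal

section Chebyshev

variable {X : Type*} [PseudoMetricSpace X] [MeasurableSpace X] [OpensMeasurableSpace X]
  {ν : Measure X} {z : X} {V : ℝ}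

lemma measureReal_compl_ball_le_div_sq {R : ℝ} (hV : 0 ≤ V) (hR : 0 < R)
    (hz : ∫⁻ y, ENNReal.ofReal (dist z y ^ 2) ∂ν ≤ ENNReal.ofReal V) :
    ν.real (Metric.ball z R)ᶜ ≤ V / R ^ 2 := by
  have hsubset : (Metric.ball z R)ᶜ ⊆
      {y | ENNReal.ofReal (R ^ 2) ≤ ENNReal.ofReal (dist z y ^ 2)} := fun y hy ↦ by
    have hRy : R ≤ dist z y := by simpa [dist_comm] using hy
    exact ENNReal.ofReal_le_ofReal (pow_le_pow_left₀ hR.le hRy 2)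
  have hmarkov : ENNReal.ofReal (R ^ 2) * ν (Metric.ball z R)ᶜ ≤ ENNReal.ofReal V :=
    (mul_le_mul_right (measure_mono hsubset) _).trans
      ((mul_meas_ge_le_lintegral (by fun_prop) _).trans hz)
  rw [le_div_iff₀' (by positivity)]
  simpa [ENNReal.toReal_ofReal, hV, sq_nonneg, measureReal_def]
    using ENNReal.toReal_mono ENNReal.ofReal_ne_top hmarkov

lemma one_sub_one_div_le_measureReal_ball_sqrt [IsProbabilityMeasure ν] {A : ℝ} (hV : 0 < V)
    (hA : 0 < A) (hz : ∫⁻ y, ENNReal.ofReal (dist z y ^ 2) ∂ν ≤ ENNReal.ofReal V) :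
    1 - 1 / A ≤ ν.real (Metric.ball z (√(A * V))) := by
  have hAV : 0 < A * V := mul_pos hA hV
  have hcompl := measureReal_compl_ball_le_div_sq hV.le (sqrt_pos.2 hAV) hz
  rw [probReal_compl_eq_one_sub measurableSet_ball, sq_sqrt hAV.le, div_mul_cancel_right₀ hV.ne',
    ← one_div] at hcompl
  linarith

end Chebyshev

section Enlargement

variable {X : Type*} [MetricSpace X]

lemma enlarge_ball_subset (z : X) (R s : ℝ) :
    enlarge (Metric.ball z R) s ⊆ Metric.ball z (R + s) := by
  unfold enlarge
  split_ifs with hs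
  · rw [hs, add_zero]
  · exact add_comm s R ▸ Metric.thickening_ball z s R

lemma subset_enlarge (E : Set X) {s : ℝ} (hs : 0 ≤ s) : E ⊆ enlarge E s := by
  unfold enlarge
  split_ifs with hs0
  · exact subset_rfl
  · exact Metric.self_subset_thickening (hs.lt_of_ne' hs0) E

namespace GaussianEnlargement

variable [MeasurableSpace X] {ν : Measure X} [IsProbabilityMeasure ν] {τ : ℝ}

lemma Phi_le_measureReal_enlarge (hν : GaussianEnlargement ν τ) {E : Set X}
    (hE : MeasurableSet E) {p s : ℝ} (hp : 0 < p) (hpE : p ≤ ν.real E) (hs : 0 ≤ s) :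
    Phi (PhiInv p + s / √(2 * τ)) ≤ ν.real (enlarge E s) := by
  have hE0 : 0 < ν.real E := hp.trans_le hpE
  rcases (measureReal_le_one : ν.real E ≤ 1).lt_or_eq with hE1 | hE1
  · have hlt_one : ν E < 1 := by
      simpa only [ENNReal.ofReal_one] using
        (ENNReal.lt_ofReal_iff_toReal_lt (measure_ne_top ν E)).2 hE1
    have hPhiInv : PhiInv p ≤ PhiInv (ν.real E) :=
      PhiInv_strictMonoOn.monotoneOn ⟨hp, hpE.trans_lt hE1⟩ ⟨hE0, hE1⟩ hpE
    calc
      Phi (PhiInv p + s / √(2 * τ)) ≤ Phi (PhiInv (ν.real E) + s / √(2 * τ)) :=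
        Phi_strictMono.monotone (by gcongr)
      _ ≤ ν.real (enlarge E s) :=
        (ENNReal.ofReal_le_iff_le_toReal (measure_ne_top ν _)).1 <|
          hν E hE (ENNReal.toReal_pos_iff.1 hE0).1 hlt_one s hs
  · calc
      Phi (PhiInv p + s / √(2 * τ)) ≤ 1 := Phi_le_one _
      _ = ν.real E := hE1.symm
      _ ≤ ν.real (enlarge E s) := measureReal_mono (subset_enlarge E hs)

lemma measureReal_compl_ball_le [OpensMeasurableSpace X] (hν : GaussianEnlargement ν τ) {z : X}
    {p R r : ℝ} (hp : 0 < p) (hpR : p ≤ ν.real (Metric.ball z R)) (hr : R ≤ r) :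
    ν.real (Metric.ball z r)ᶜ ≤ 1 - Phi (PhiInv p + (r - R) / √(2 * τ)) := by
  rw [probReal_compl_eq_one_sub measurableSet_ball]
  gcongr
  calc
    Phi (PhiInv p + (r - R) / √(2 * τ)) ≤ ν.real (enlarge (Metric.ball z R) (r - R)) :=
      hν.Phi_le_measureReal_enlarge measurableSet_ball hp hpR (sub_nonneg.2 hr)
    _ ≤ ν.real (Metric.ball z r) :=
      measureReal_mono ((enlarge_ball_subset z R (r - R)).trans_eq (by rw [add_sub_cancel]))

end GaussianEnlargement

end Enlargement

/-- Gaussian-profile tails from an `H`-center: if `ν` satisfies the Gaussian enlargement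
property with parameter `τ` and `∫ d(z,y)² dν ≤ Hτ`, then for every `A > 1` and every
`r ≥ √(AHτ)`, `ν(X ∖ B(z,r)) ≤ 1 - Φ(Φ⁻¹(1 - 1/A) + (r - √(AHτ))/√(2τ))`; in particular
`ν(X ∖ B(z,r)) ≤ Φ(-(r - √(2Hτ))/√(2τ))` for `r ≥ √(2Hτ)`. -/
theorem stmt14 {X : Type*} [MetricSpace X] [MeasurableSpace X] [BorelSpace X]
    (ν : Measure X) [IsProbabilityMeasure ν] (τ : ℝ) (hτ : 0 < τ)
    (hGEP : GaussianEnlargement ν τ)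
    (H : ℝ) (hH : 0 < H) (z : X)
    (hz : ∫⁻ y, ENNReal.ofReal (dist z y ^ 2) ∂ν ≤ ENNReal.ofReal (H * τ)) :
    (∀ A : ℝ, 1 < A → ∀ r : ℝ, Real.sqrt (A * H * τ) ≤ r →
      (ν (Metric.ball z r)ᶜ).toReal ≤
        1 - Phi (PhiInv (1 - 1 / A) + (r - Real.sqrt (A * H * τ)) / Real.sqrt (2 * τ))) ∧
    (∀ r : ℝ, Real.sqrt (2 * H * τ) ≤ r →
      (ν (Metric.ball z r)ᶜ).toReal ≤
        Phi (-(r - Real.sqrt (2 * H * τ)) / Real.sqrt (2 * τ))) := by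
  have tail (A : ℝ) (hA : 1 < A) (r : ℝ) (hr : √(A * H * τ) ≤ r) : ν.real (Metric.ball z r)ᶜ ≤
      1 - Phi (PhiInv (1 - 1 / A) + (r - √(A * H * τ)) / √(2 * τ)) := by
    have hmass : 1 - 1 / A ≤ ν.real (Metric.ball z √(A * H * τ)) := by
      rw [mul_assoc]
      exact one_sub_one_div_le_measureReal_ball_sqrt (mul_pos hH hτ) (one_pos.trans hA) hz
    have hmass_pos : 0 < 1 - 1 / A := sub_pos.2 ((div_lt_one (one_pos.trans hA)).2 hA)
    exact hGEP.measureReal_compl_ball_le hmass_pos hmass hr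
  refine ⟨tail, fun r hr ↦ ?_⟩
  have h := tail 2 one_lt_two r hr
  rwa [sub_half, PhiInv_half, zero_add, ← Phi_neg, ← neg_div] at h
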